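/- Let ν be a σ-finite measure on a measurable space and let f and g be two ν-a.e. strictly positive probability densities with respect to ν such that I := ∫ g log(g/f) dν ∈ (0,∞). Let (X_n)_{n≥1} be i.i.d. random variables with natural filtration F = (F_n)_{n≥0}, and write P_g, E_g (resp. P_f) for probability and expectation when the common density is g (resp. f). Let T be an F-stopping time with P_f(T < ∞) = P_g(T < ∞) = 1 and E_g[T] < ∞, and let D be a {0,1}-valued random variable measurable with respect to the stopped σ-algebra F_T. If α, β ∈ (0,1) satisfy α + β < 1 and P_f(D = 1) ≤ α and P_g(D = 0) ≤ β, then E_g[T] ≥ d(β, α)/I. -/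

import Mathlib

open MeasureTheory ProbabilityTheory
open scoped ENNReal BigOperators

/-!
Let `S` be the log-likelihood ratio of `g` against `f` for the observations made up to time `T`.
By Wald's identity its mean under `P_g` is `I * E_g[T]`, so it suffices to show
`d(β, α) ≤ E_g[S]`. Change of measure at time `T` gives `∫_A exp (-S) dP_g ≤ P_f(A)` for every
event `A` of the stopped σ-algebra. Integrating the tangent line inequality
`s ≥ 1 + log c - c * exp (-s)` over `A = {D = 1}` with `c = (1 - β) / α` and over `A = {D = 0}`
with `c = β / (1 - α)` bounds `E_g[S]` below by an expression in the error probabilities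
`P_f(D = 1)` and `P_g(D = 0)` that is decreasing in both when `α + β < 1` and equals `d(β, α)`
when they are `α` and `β`.
-/

section ProductMeasure

variable {ι : Type*} [Fintype ι] {E : ι → Type*} [∀ i, MeasurableSpace (E i)]

theorem le_pi_of_forall_univ_pi_le {κ : Measure (∀ i, E i)} {ρ : ∀ i, Measure (E i)}
    (h : ∀ s : ∀ i, Set (E i), (∀ i, MeasurableSet (s i)) →
      κ (Set.univ.pi s) ≤ ∏ i, ρ i (s i)) :
    κ ≤ Measure.pi ρ := by
  refine Measure.le_iff.2 fun B hB => ?_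
  rw [Measure.pi, toMeasure_apply _ _ hB]
  refine (OuterMeasure.le_pi.2 fun s _ => ?_ :
    κ.toOuterMeasure ≤ OuterMeasure.pi fun i => (ρ i).toOuterMeasure) B
  calc κ (Set.univ.pi s)
      ≤ κ (Set.univ.pi fun i => toMeasurable (ρ i) (s i)) :=
        measure_mono (Set.pi_mono fun i _ => subset_toMeasurable _ _)
    _ ≤ ∏ i, ρ i (toMeasurable (ρ i) (s i)) := h _ fun i => measurableSet_toMeasurable _ _
    _ = ∏ i, ρ i (s i) := by simp only [measure_toMeasurable]

theorem setLIntegral_univ_pi_prod_eq_prod {μ : ∀ i, Measure (E i)}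
    [∀ i, IsProbabilityMeasure (μ i)] {r : ∀ i, E i → ℝ≥0∞} (hr : ∀ i, Measurable (r i))
    {s : ∀ i, Set (E i)} (hs : ∀ i, MeasurableSet (s i)) :
    ∫⁻ x in Set.univ.pi s, ∏ i, r i (x i) ∂Measure.pi μ = ∏ i, ∫⁻ t in s i, r i t ∂μ i := by
  have hrs : ∀ i, Measurable ((s i).indicator (r i)) := fun i => (hr i).indicator (hs i)
  have indicator_prod : (Set.univ.pi s).indicator (fun x => ∏ i, r i (x i)) =
      fun x => ∏ i, (s i).indicator (r i) (x i) := by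
    ext x
    by_cases hx : x ∈ Set.univ.pi s
    · rw [Set.indicator_of_mem hx]
      exact Finset.prod_congr rfl fun i _ => (Set.indicator_of_mem (hx i trivial) _).symm
    · obtain ⟨i, hi⟩ : ∃ i, x i ∉ s i := by simpa using hx
      rw [Set.indicator_of_notMem hx]
      exact (Finset.prod_eq_zero (Finset.mem_univ i) (Set.indicator_of_notMem hi _)).symm
  rw [← lintegral_indicator (.univ_pi hs), indicator_prod,
    lintegral_prod_eq_prod_lintegral_of_indepFun _ _
      (iIndepFun_pi fun i => (hrs i).aemeasurable) fun i => (hrs i).comp (measurable_pi_apply i)]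
  refine Finset.prod_congr rfl fun i _ => ?_
  rw [← lintegral_indicator (hs i)]
  exact (measurePreserving_eval μ i).lintegral_comp (hrs i)

theorem pi_withDensity_prod_le_pi {μ ρ : ∀ i, Measure (E i)} [∀ i, IsProbabilityMeasure (μ i)]
    {r : ∀ i, E i → ℝ≥0∞} (hr : ∀ i, Measurable (r i))
    (hle : ∀ i, (μ i).withDensity (r i) ≤ ρ i) :
    (Measure.pi μ).withDensity (fun x => ∏ i, r i (x i)) ≤ Measure.pi ρ := by
  refine le_pi_of_forall_univ_pi_le fun s hs => ?_
  rw [withDensity_apply _ (.univ_pi hs), setLIntegral_univ_pi_prod_eq_prod hr hs]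
  exact Finset.prod_le_prod' fun i _ => by simpa only [withDensity_apply _ (hs i)] using hle i (s i)

end ProductMeasure

section PastFiltration

variable {Ω E : Type*} {mΩ : MeasurableSpace Ω} {mE : MeasurableSpace E} {X : ℕ → Ω → E}

/-- The natural filtration of the observations `X 0, X 1, …`, indexed by the number of
observations made: at time `n` the variables `X 0, …, X (n - 1)` are known. Mathlib's
`Filtration.natural` would already contain `X n`. -/
def pastFiltration (X : ℕ → Ω → E) (hX : ∀ n, Measurable (X n)) : Filtration ℕ mΩ where
  seq n := MeasurableSpace.comap (fun ω => fun i : Fin n => X i ω) MeasurableSpace.pi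
  mono' m n hmn := by
    rintro _ ⟨B, hB, rfl⟩
    exact ⟨(fun x i => x (Fin.castLE hmn i)) ⁻¹' B,
      (measurable_pi_lambda _ fun _ => measurable_pi_apply _) hB, rfl⟩
  le' n := (measurable_pi_lambda _ fun i : Fin n => hX i).comap_le

theorem indep_comap_pastFiltration {Q : Measure Ω} (hX : ∀ n, Measurable (X n))
    (hindep : iIndepFun X Q) (n : ℕ) :
    Indep (MeasurableSpace.comap (X n) mE) (pastFiltration X hX n) Q := by
  have hpresent : Measurable fun x : ({n} : Finset ℕ) → E => x ⟨n, by simp⟩ := by fun_prop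
  have hpast : Measurable fun (x : Finset.range n → E) (i : Fin n) => x ⟨i, by simp⟩ := by
    fun_prop
  exact (hindep.indepFun_finset {n} (Finset.range n) (by simp) hX).comp hpresent hpast

theorem setLIntegral_prod_le_of_withDensity_le {P Q : Measure Ω} (hX : ∀ n, Measurable (X n))
    (hP : iIndepFun X P) (hQ : iIndepFun X Q) {r : ℕ → E → ℝ≥0∞} (hr : ∀ n, Measurable (r n))
    (hle : ∀ n, (Q.map (X n)).withDensity (r n) ≤ P.map (X n)) (n : ℕ) {A : Set Ω}
    (hA : MeasurableSet[pastFiltration X hX n] A) :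
    ∫⁻ ω in A, ∏ i ∈ Finset.range n, r i (X i ω) ∂Q ≤ P A := by
  have := hQ.isProbabilityMeasure
  have (i : Fin n) : IsProbabilityMeasure (Q.map (X i)) :=
    Measure.isProbabilityMeasure_map (hX i).aemeasurable
  obtain ⟨B, hB, rfl⟩ := hA
  have hpast : Measurable fun ω (i : Fin n) => X i ω := measurable_pi_lambda _ fun i => hX i
  have law {R : Measure Ω} (hR : iIndepFun X R) :
      R.map (fun ω (i : Fin n) => X i ω) = Measure.pi fun i : Fin n => R.map (X i) :=
    (hR.precomp Fin.val_injective).map_fun_eq_pi_map fun i => (hX i).aemeasurable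
  have hprod : Measurable fun x : Fin n → E => ∏ i : Fin n, r i (x i) :=
    Finset.measurable_prod _ fun i _ => (hr i).comp (measurable_pi_apply i)
  simp only [Finset.prod_range]
  rw [← setLIntegral_map hB hprod hpast, ← Measure.map_apply hpast hB, law hP, law hQ,
    ← withDensity_apply _ hB]
  exact pi_withDensity_prod_le_pi (fun i : Fin n => hr i) (fun i => hle i) B

end PastFiltration

section StoppingTime

variable {Ω : Type*} {mΩ : MeasurableSpace Ω} {P Q : Measure Ω} {𝓕 : Filtration ℕ mΩ}
  {τ : Ω → ℕ∞}

theorem measurableSet_inter_ne_top (hτ : IsStoppingTime 𝓕 τ) {A : Set Ω}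
    (hA : ∀ n : ℕ, MeasurableSet[𝓕 n] (A ∩ {ω | τ ω ≤ n})) :
    MeasurableSet[hτ.measurableSpace] (A ∩ {ω | τ ω ≠ ⊤}) := by
  have iUnion_eq : A ∩ {ω | τ ω ≠ ⊤} = ⋃ n : ℕ, A ∩ {ω | τ ω ≤ n} := by
    rw [← Set.inter_iUnion]
    congr 1
    ext ω
    simp only [Set.mem_iUnion, Set.mem_ofPred_eq, ENat.ne_top_iff_exists]
    exact ⟨fun ⟨n, hn⟩ => ⟨n, hn.ge⟩, fun ⟨n, hn⟩ =>
      ENat.ne_top_iff_exists.1 (ne_top_of_le_ne_top (ENat.natCast_ne_top n) hn)⟩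
  refine ⟨?_, fun n => ?_⟩
  · rw [iUnion_eq]
    exact .iUnion fun n => le_iSup 𝓕 n _ (hA n)
  · convert hA n using 1
    ext ω
    simp only [Set.mem_inter_iff, Set.mem_ofPred_eq]
    exact ⟨fun ⟨⟨hωA, _⟩, hωn⟩ => ⟨hωA, hωn⟩, fun ⟨hωA, hωn⟩ =>
      ⟨⟨hωA, ne_top_of_le_ne_top (ENat.natCast_ne_top n) hωn⟩, hωn⟩⟩

theorem setLIntegral_stoppedValue_le {L : ℕ → Ω → ℝ≥0∞}
    (hL : ∀ n A, MeasurableSet[𝓕 n] A → ∫⁻ ω in A, L n ω ∂Q ≤ P A)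
    (hτ : IsStoppingTime 𝓕 τ) (hτ_top : ∀ᵐ ω ∂Q, τ ω ≠ ⊤) {A : Set Ω}
    (hA : MeasurableSet[hτ.measurableSpace] A) :
    ∫⁻ ω in A, stoppedValue L τ ω ∂Q ≤ P A := by
  let B : ℕ → Set Ω := fun n => A ∩ {ω | τ ω = n}
  have hB (n : ℕ) : MeasurableSet[𝓕 n] (B n) :=
    (hτ.measurableSet_inter_eq_iff A n).1 (hA.inter (hτ.measurableSet_eq_of_countable' n))
  have hB' (n : ℕ) : MeasurableSet (B n) := 𝓕.le n _ (hB n)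
  have hB_disj : Pairwise (Function.onFun Disjoint B) := fun m n hmn =>
    Set.disjoint_left.2 fun ω hm hn => hmn (Nat.cast_injective (hm.2.symm.trans hn.2))
  have hA_ae : A =ᵐ[Q] ⋃ n, B n := by
    filter_upwards [hτ_top] with ω hω
    obtain ⟨n, hn⟩ := ENat.ne_top_iff_exists.1 hω
    refine propext ⟨fun hωA => Set.mem_iUnion.2 ⟨n, hωA, hn.symm⟩, fun hωB => ?_⟩
    obtain ⟨m, hm⟩ := Set.mem_iUnion.1 hωB
    exact hm.1
  calc ∫⁻ ω in A, stoppedValue L τ ω ∂Q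
      = ∑' n, ∫⁻ ω in B n, stoppedValue L τ ω ∂Q := by
        rw [setLIntegral_congr hA_ae, lintegral_iUnion hB' hB_disj]
    _ = ∑' n, ∫⁻ ω in B n, L n ω ∂Q := tsum_congr fun n =>
        setLIntegral_congr_fun (hB' n) fun ω hω => by
          simp only [stoppedValue, show τ ω = n from hω.2]
          rfl
    _ ≤ ∑' n, P (B n) := ENNReal.tsum_le_tsum fun n => hL n _ (hB n)
    _ = P (⋃ n, B n) := (measure_iUnion hB_disj hB').symm
    _ ≤ P A := measure_mono (Set.iUnion_subset fun n => Set.inter_subset_left)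

theorem measurable_of_isStoppingTime (hτ : IsStoppingTime 𝓕 τ) : Measurable τ :=
  ENat.measurable_iff.2 fun n => 𝓕.le n _ (hτ.measurableSet_eq_of_countable n)

theorem toENNReal_eq_tsum_indicator_lt (t : ℕ∞) :
    (t : ℝ≥0∞) = ∑' n : ℕ, {n : ℕ | n < t}.indicator 1 n := by
  have encard_lt : {n : ℕ | n < t}.encard = t := by
    cases t with
    | top => simp
    | coe k =>
      have : {n : ℕ | (n : ℕ∞) < k} = Finset.range k := by ext; simp
      rw [this, Set.encard_coe_eq_coe_finsetCard, Finset.card_range]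
  rw [← tsum_subtype]
  simp only [Pi.one_apply, ENNReal.tsum_set_one, encard_lt]

theorem lintegral_eq_tsum_measure_lt (hτ : Measurable τ) :
    ∫⁻ ω, (τ ω : ℝ≥0∞) ∂Q = ∑' n : ℕ, Q {ω | n < τ ω} := by
  have hlt (n : ℕ) : MeasurableSet {ω | n < τ ω} := hτ (.of_discrete (s := Set.Ioi (n : ℕ∞)))
  calc ∫⁻ ω, (τ ω : ℝ≥0∞) ∂Q
      = ∫⁻ ω, ∑' n : ℕ, {ω | n < τ ω}.indicator 1 ω ∂Q := by
        simp only [toENNReal_eq_tsum_indicator_lt (τ _)]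
        rfl
    _ = ∑' n : ℕ, Q {ω | n < τ ω} := by
        rw [lintegral_tsum fun n => (measurable_one.indicator (hlt n)).aemeasurable]
        simp only [lintegral_indicator_one (hlt _)]

theorem hasSum_measureReal_lt [IsFiniteMeasure Q] (hτ : Measurable τ)
    (hτ_int : ∫⁻ ω, (τ ω : ℝ≥0∞) ∂Q ≠ ⊤) :
    HasSum (fun n : ℕ => Q.real {ω | n < τ ω}) (∫⁻ ω, (τ ω : ℝ≥0∞) ∂Q).toReal := by
  rw [lintegral_eq_tsum_measure_lt hτ] at hτ_int ⊢
  rw [ENNReal.tsum_toReal_eq fun n => measure_ne_top _ _]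
  exact ENNReal.hasSum_toReal hτ_int

theorem ae_ne_top_of_lintegral_ne_top (hτ : Measurable τ)
    (hτ_int : ∫⁻ ω, (τ ω : ℝ≥0∞) ∂Q ≠ ⊤) : ∀ᵐ ω ∂Q, τ ω ≠ ⊤ := by
  filter_upwards [ae_lt_top (Measurable.of_discrete.comp hτ) hτ_int] with ω hω
  simpa using hω.ne

theorem hasSum_indicator_lt_stoppedValue {M : Type*} [AddCommMonoid M] [TopologicalSpace M]
    {Y : ℕ → Ω → M} {ω : Ω} (hω : τ ω ≠ ⊤) :
    HasSum (fun n : ℕ => {ω | n < τ ω}.indicator (Y n) ω)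
      (stoppedValue (fun n ω => ∑ i ∈ Finset.range n, Y i ω) τ ω) := by
  obtain ⟨k, hk⟩ := ENat.ne_top_iff_exists.1 hω
  have hvalue : stoppedValue (fun n ω => ∑ i ∈ Finset.range n, Y i ω) τ ω =
      ∑ n ∈ Finset.range k, {ω | n < τ ω}.indicator (Y n) ω := by
    simp only [stoppedValue, ← hk]
    refine Finset.sum_congr rfl fun n hn => (Set.indicator_of_mem ?_ _).symm
    simpa [← hk] using hn
  rw [hvalue]
  exact hasSum_sum_of_ne_finset_zero fun n hn =>
    Set.indicator_of_notMem (by simpa [← hk] using hn) _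

end StoppingTime

section Wald

variable {Ω F : Type*} {mΩ : MeasurableSpace Ω} {Q : Measure Ω} [NormedAddCommGroup F]

theorem integrable_of_hasSum_of_summable_integral_norm {Y : ℕ → Ω → F} {S : Ω → F}
    (hY : ∀ n, Integrable (Y n) Q) (hsum : Summable fun n => ∫ ω, ‖Y n ω‖ ∂Q)
    (hS : ∀ᵐ ω ∂Q, HasSum (fun n => Y n ω) (S ω)) : Integrable S Q := by
  refine ⟨aestronglyMeasurable_of_tendsto_ae Filter.atTop
    (fun m => (integrable_finsetSum (Finset.range m) fun n _ => hY n).aestronglyMeasurable)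
    (hS.mono fun ω hω => hω.tendsto_sum_nat), ?_⟩
  calc ∫⁻ ω, ‖S ω‖ₑ ∂Q
      ≤ ∫⁻ ω, ∑' n, ‖Y n ω‖ₑ ∂Q :=
        lintegral_mono_ae (hS.mono fun ω hω => hω.tsum_eq ▸ enorm_tsum_le_tsum_enorm)
    _ = ∑' n, ENNReal.ofReal (∫ ω, ‖Y n ω‖ ∂Q) := by
        rw [lintegral_tsum fun n => (hY n).aestronglyMeasurable.enorm]
        simp only [ofReal_integral_norm_eq_lintegral_enorm (hY _)]
    _ = ENNReal.ofReal (∑' n, ∫ ω, ‖Y n ω‖ ∂Q) :=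
        (ENNReal.ofReal_tsum_of_nonneg (fun n => integral_nonneg fun _ => norm_nonneg _) hsum).symm
    _ < ⊤ := ENNReal.ofReal_lt_top

/-- **Wald's identity**. -/
theorem integrable_and_integral_stoppedValue_sum [IsFiniteMeasure Q] [NormedSpace ℝ F]
    [MeasurableSpace F] [BorelSpace F] [SecondCountableTopology F] {𝓕 : Filtration ℕ mΩ}
    {τ : Ω → ℕ∞} {Y : ℕ → Ω → F} (hY_ident : ∀ n, IdentDistrib (Y n) (Y 0) Q Q)
    (hY_int : Integrable (Y 0) Q)
    (hindep : ∀ n, Indep (MeasurableSpace.comap (Y n) inferInstance) (𝓕 n) Q)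
    (hτ : IsStoppingTime 𝓕 τ) (hτ_int : ∫⁻ ω, (τ ω : ℝ≥0∞) ∂Q ≠ ⊤) :
    Integrable (stoppedValue (fun n ω => ∑ i ∈ Finset.range n, Y i ω) τ) Q ∧
      ∫ ω, stoppedValue (fun n ω => ∑ i ∈ Finset.range n, Y i ω) τ ω ∂Q =
        (∫⁻ ω, (τ ω : ℝ≥0∞) ∂Q).toReal • ∫ ω, Y 0 ω ∂Q := by
  have hτ_meas := measurable_of_isStoppingTime hτ
  have hlt (n : ℕ) : MeasurableSet[𝓕 n] {ω | n < τ ω} := hτ.measurableSet_gt n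
  have hY_int' (n : ℕ) : Integrable (Y n) Q := (hY_ident n).integrable_iff.2 hY_int
  have hYτ_int (n : ℕ) : Integrable ({ω | n < τ ω}.indicator (Y n)) Q :=
    (hY_int' n).indicator (𝓕.le n _ (hlt n))
  have integral_Yτ (n : ℕ) : ∫ ω, {ω | n < τ ω}.indicator (Y n) ω ∂Q =
      Q.real {ω | n < τ ω} • ∫ ω, Y 0 ω ∂Q := by
    rw [integral_indicator (𝓕.le n _ (hlt n)), ← (hY_ident n).integral_eq]
    exact (hindep n).symm.setIntegral_eq_smul (𝓕.le n) (hY_ident n).aemeasurable_fst (hlt n)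
      aestronglyMeasurable_id
  have integral_norm_Yτ (n : ℕ) : ∫ ω, ‖{ω | n < τ ω}.indicator (Y n) ω‖ ∂Q =
      Q.real {ω | n < τ ω} • ∫ ω, ‖Y 0 ω‖ ∂Q := by
    simp only [norm_indicator_eq_indicator_norm]
    rw [integral_indicator (𝓕.le n _ (hlt n)), ← (hY_ident n).norm.integral_eq]
    exact (hindep n).symm.setIntegral_eq_smul (𝓕.le n) (hY_ident n).aemeasurable_fst (hlt n)
      aestronglyMeasurable_id.norm
  have tails := hasSum_measureReal_lt hτ_meas hτ_int
  have hsummable : Summable fun n : ℕ => ∫ ω, ‖{ω | n < τ ω}.indicator (Y n) ω‖ ∂Q := by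
    simpa only [integral_norm_Yτ] using tails.summable.smul_const _
  have hsum : ∀ᵐ ω ∂Q, HasSum (fun n : ℕ => {ω | n < τ ω}.indicator (Y n) ω)
      (stoppedValue (fun n ω => ∑ i ∈ Finset.range n, Y i ω) τ ω) :=
    (ae_ne_top_of_lintegral_ne_top hτ_meas hτ_int).mono fun ω => hasSum_indicator_lt_stoppedValue
  refine ⟨integrable_of_hasSum_of_summable_integral_norm hYτ_int hsummable hsum, ?_⟩
  have h := hasSum_integral_of_summable_integral_norm hYτ_int hsummable
  rw [integral_congr_ae (hsum.mono fun ω hω => hω.tsum_eq)] at h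
  simp only [integral_Yτ] at h
  exact h.unique (tails.smul_const _)

end Wald

section BinaryDivergence

/-- The function `d` of the lower bound: `binaryDivergence x y` is the Kullback–Leibler divergence
between the Bernoulli laws of parameters `x` and `1 - y`, for `x, y ∈ (0, 1)`. -/
noncomputable def binaryDivergence (x y : ℝ) : ℝ :=
  x * Real.log (x / (1 - y)) + (1 - x) * Real.log ((1 - x) / y)

theorem binaryDivergence_le_of_le {α β p q : ℝ} (hα : 0 < α) (hβ : 0 < β) (hαβ : α + β < 1)
    (hp : p ≤ β) (hq : q ≤ α) :
    binaryDivergence β α ≤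
      (1 + Real.log ((1 - β) / α)) * (1 - p) - (1 - β) / α * q +
        ((1 + Real.log (β / (1 - α))) * p - β / (1 - α) * (1 - q)) := by
  have hα' : 0 < 1 - α := by linarith
  have one_le_c₁ : 1 ≤ (1 - β) / α := (one_le_div hα).2 (by linarith)
  have c₀_le_one : β / (1 - α) ≤ 1 := (div_le_one hα').2 (by linarith)
  have log_c₁_nonneg : 0 ≤ Real.log ((1 - β) / α) := Real.log_nonneg one_le_c₁
  have log_c₀_nonpos : Real.log (β / (1 - α)) ≤ 0 := Real.log_nonpos (by positivity) c₀_le_one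
  have gap : (1 + Real.log ((1 - β) / α)) * (1 - p) - (1 - β) / α * q +
        ((1 + Real.log (β / (1 - α))) * p - β / (1 - α) * (1 - q)) - binaryDivergence β α =
      (β - p) * (Real.log ((1 - β) / α) - Real.log (β / (1 - α))) +
        (α - q) * ((1 - β) / α - β / (1 - α)) := by
    have c₁_mul : (1 - β) / α * α = 1 - β := div_mul_cancel₀ _ hα.ne'
    have c₀_mul : β / (1 - α) * (1 - α) = β := div_mul_cancel₀ _ hα'.ne'
    unfold binaryDivergence
    linear_combination -c₁_mul - c₀_mul
  have gap_nonneg := add_nonneg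
    (mul_nonneg (sub_nonneg.2 hp) (sub_nonneg.2 (log_c₀_nonpos.trans log_c₁_nonneg)))
    (mul_nonneg (sub_nonneg.2 hq) (sub_nonneg.2 (c₀_le_one.trans one_le_c₁)))
  linarith

variable {Ω : Type*} {mΩ : MeasurableSpace Ω} {P Q : Measure Ω} {S : Ω → ℝ}

theorem one_add_log_mul_sub_le_setIntegral [IsFiniteMeasure P] [IsFiniteMeasure Q]
    (hS : Integrable S Q) {A : Set Ω}
    (hA : ∫⁻ ω in A, ENNReal.ofReal (Real.exp (-S ω)) ∂Q ≤ P A) {c : ℝ} (hc : 0 < c) :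
    (1 + Real.log c) * Q.real A - c * P.real A ≤ ∫ ω in A, S ω ∂Q := by
  have exp_nonneg : 0 ≤ᵐ[Q.restrict A] fun ω => Real.exp (-S ω) := .of_forall fun _ => by positivity
  have exp_meas : AEStronglyMeasurable (fun ω => Real.exp (-S ω)) (Q.restrict A) :=
    Real.continuous_exp.comp_aestronglyMeasurable hS.aestronglyMeasurable.neg.restrict
  have exp_int : IntegrableOn (fun ω => Real.exp (-S ω)) A Q :=
    ⟨exp_meas, (hasFiniteIntegral_iff_ofReal exp_nonneg).2 (hA.trans_lt (measure_lt_top P A))⟩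
  have exp_le : ∫ ω in A, Real.exp (-S ω) ∂Q ≤ P.real A := by
    rw [integral_eq_lintegral_of_nonneg_ae exp_nonneg exp_meas]
    exact ENNReal.toReal_mono (measure_ne_top P A) hA
  have tangent (ω : Ω) : 1 + Real.log c - c * Real.exp (-S ω) ≤ S ω := by
    have h := Real.add_one_le_exp (Real.log c - S ω)
    rw [sub_eq_add_neg, Real.exp_add, Real.exp_log hc] at h
    linarith
  calc (1 + Real.log c) * Q.real A - c * P.real A
      ≤ (1 + Real.log c) * Q.real A - c * ∫ ω in A, Real.exp (-S ω) ∂Q := by gcongr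
    _ = ∫ ω in A, (1 + Real.log c - c * Real.exp (-S ω)) ∂Q := by
        rw [integral_sub (integrable_const _) (exp_int.const_mul c), integral_const_mul,
          setIntegral_const, smul_eq_mul, mul_comm (Q.real A)]
    _ ≤ ∫ ω in A, S ω ∂Q :=
        setIntegral_mono ((integrable_const _).sub (exp_int.const_mul c)) hS.integrableOn tangent

theorem binaryDivergence_le_integral [IsProbabilityMeasure P] [IsProbabilityMeasure Q]
    (hS : Integrable S Q) {R : Set Ω} (hR : MeasurableSet R)
    (hSR : ∫⁻ ω in R, ENNReal.ofReal (Real.exp (-S ω)) ∂Q ≤ P R)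
    (hSRc : ∫⁻ ω in Rᶜ, ENNReal.ofReal (Real.exp (-S ω)) ∂Q ≤ P Rᶜ)
    {α β : ℝ} (hα : 0 < α) (hβ : 0 < β) (hαβ : α + β < 1)
    (hPR : P R ≤ ENNReal.ofReal α) (hQR : Q Rᶜ ≤ ENNReal.ofReal β) :
    binaryDivergence β α ≤ ∫ ω, S ω ∂Q := by
  have hq : P.real R ≤ α := ENNReal.toReal_le_of_le_ofReal hα.le hPR
  have hp : Q.real Rᶜ ≤ β := ENNReal.toReal_le_of_le_ofReal hβ.le hQR
  have hc₁ : 0 < (1 - β) / α := div_pos (by linarith) hα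
  have hc₀ : 0 < β / (1 - α) := div_pos hβ (by linarith)
  have hQR' : Q.real R = 1 - Q.real Rᶜ := by rw [probReal_compl_eq_one_sub hR]; ring
  calc binaryDivergence β α
      ≤ _ := binaryDivergence_le_of_le hα hβ hαβ hp hq
    _ ≤ ∫ ω in R, S ω ∂Q + ∫ ω in Rᶜ, S ω ∂Q := by
        rw [← hQR', ← probReal_compl_eq_one_sub hR]
        exact add_le_add (one_add_log_mul_sub_le_setIntegral hS hSR hc₁)
          (one_add_log_mul_sub_le_setIntegral hS hSRc hc₀)
    _ = ∫ ω, S ω ∂Q := integral_add_compl hR hS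

end BinaryDivergence

section Density

variable {E F : Type*} {mE : MeasurableSpace E} {ν : Measure E} {g : E → ℝ}
  [NormedAddCommGroup F] [NormedSpace ℝ F] {Z : E → F}

theorem withDensity_exp_neg_log_div_le {f : E → ℝ} (hf : Measurable f)
    (hg : Measurable g) (hfg : ∀ᵐ t ∂ν, 0 < g t → 0 < f t) :
    (ν.withDensity fun t => ENNReal.ofReal (g t)).withDensity
        (fun t => ENNReal.ofReal (Real.exp (-Real.log (g t / f t)))) ≤
      ν.withDensity fun t => ENNReal.ofReal (f t) := by
  rw [← withDensity_mul _ (by fun_prop) (by fun_prop)]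
  refine withDensity_mono (hfg.mono fun t hgf => ?_)
  rcases le_or_gt (g t) 0 with hgt | hgt
  · simp [ENNReal.ofReal_of_nonpos hgt]
  · have hft := hgf hgt
    rw [Pi.mul_apply, ← ENNReal.ofReal_mul hgt.le, Real.exp_neg, Real.exp_log (div_pos hgt hft),
      inv_div, mul_div_cancel₀ _ hgt.ne']

theorem integrable_withDensity_ofReal_iff (hg : Measurable g)
    (hg_nonneg : 0 ≤ᵐ[ν] g) :
    Integrable Z (ν.withDensity fun t => ENNReal.ofReal (g t)) ↔
      Integrable (fun t => g t • Z t) ν := by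
  rw [integrable_withDensity_iff_integrable_smul' hg.ennreal_ofReal
    (.of_forall fun _ => ENNReal.ofReal_lt_top)]
  exact integrable_congr (hg_nonneg.mono fun t ht => by simp [ENNReal.toReal_ofReal ht])

theorem integral_withDensity_ofReal (hg : Measurable g)
    (hg_nonneg : 0 ≤ᵐ[ν] g) :
    ∫ t, Z t ∂(ν.withDensity fun t => ENNReal.ofReal (g t)) = ∫ t, g t • Z t ∂ν := by
  rw [integral_withDensity_eq_integral_toReal_smul hg.ennreal_ofReal
    (.of_forall fun _ => ENNReal.ofReal_lt_top)]
  exact integral_congr_ae (hg_nonneg.mono fun t ht => by simp [ENNReal.toReal_ofReal ht])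

end Density

section SequentialTest

variable {Ω E : Type*} {mΩ : MeasurableSpace Ω} {mE : MeasurableSpace E}

theorem binaryDivergence_le_integral_mul_lintegral {P Q : Measure Ω} {ρ μ : Measure E}
    {X : ℕ → Ω → E} (hX : ∀ n, Measurable (X n))
    (hP : iIndepFun X P) (hP_law : ∀ n, P.map (X n) = ρ)
    (hQ : iIndepFun X Q) (hQ_law : ∀ n, Q.map (X n) = μ)
    {Z : E → ℝ} (hZ : Measurable Z) (hZ_int : Integrable Z μ)
    (hZ_le : μ.withDensity (fun t => ENNReal.ofReal (Real.exp (-Z t))) ≤ ρ)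
    {T : Ω → ℕ∞} (hT : IsStoppingTime (pastFiltration X hX) T)
    (hT_int : ∫⁻ ω, (T ω : ℝ≥0∞) ∂Q ≠ ⊤)
    {R : Set Ω} (hR : MeasurableSet[hT.measurableSpace] R)
    {α β : ℝ} (hα : 0 < α) (hβ : 0 < β) (hαβ : α + β < 1)
    (hPR : P R ≤ ENNReal.ofReal α) (hQR : Q Rᶜ ≤ ENNReal.ofReal β) :
    binaryDivergence β α ≤ (∫ t, Z t ∂μ) * (∫⁻ ω, (T ω : ℝ≥0∞) ∂Q).toReal := by
  have := hP.isProbabilityMeasure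
  have := hQ.isProbabilityMeasure
  have hX_law (n : ℕ) : HasLaw (X n) μ Q := ⟨(hX n).aemeasurable, hQ_law n⟩
  obtain ⟨hS_int, wald⟩ := integrable_and_integral_stoppedValue_sum (Y := fun n ω => Z (X n ω))
    (fun n => ((hX_law n).identDistrib (hX_law 0)).comp hZ)
    ((hQ_law 0 ▸ hZ_int).comp_measurable (hX 0))
    (fun n => indep_of_indep_of_le_left (indep_comap_pastFiltration hX hQ n)
      (MeasurableSpace.comap_comp ▸ MeasurableSpace.comap_mono hZ.comap_le))
    hT hT_int
  set S := stoppedValue (fun n ω => ∑ i ∈ Finset.range n, Z (X i ω)) T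
  have change_of_measure {A : Set Ω} (hA : MeasurableSet[hT.measurableSpace] A) :
      ∫⁻ ω in A, ENNReal.ofReal (Real.exp (-S ω)) ∂Q ≤ P A := by
    refine setLIntegral_stoppedValue_le
      (L := fun n ω => ENNReal.ofReal (Real.exp (-∑ i ∈ Finset.range n, Z (X i ω))))
      (fun n B hB => ?_) hT
      (ae_ne_top_of_lintegral_ne_top (measurable_of_isStoppingTime hT) hT_int) hA
    simp only [← Finset.sum_neg_distrib, Real.exp_sum,
      ENNReal.ofReal_prod_of_nonneg fun _ _ => (Real.exp_pos _).le]
    exact setLIntegral_prod_le_of_withDensity_le hX hP hQ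
      (r := fun _ t => ENNReal.ofReal (Real.exp (-Z t))) (fun _ => by fun_prop)
      (fun n => by rwa [hP_law, hQ_law]) n hB
  have integral_S : ∫ ω, S ω ∂Q = (∫ t, Z t ∂μ) * (∫⁻ ω, (T ω : ℝ≥0∞) ∂Q).toReal := by
    rw [wald, smul_eq_mul, mul_comm, ← (hX_law 0).integral_comp hZ.aestronglyMeasurable]
    rfl
  rw [← integral_S]
  exact binaryDivergence_le_integral hS_int (hT.measurableSpace_le R hR) (change_of_measure hR)
    (change_of_measure hR.compl) hα hβ hαβ hPR hQR

theorem stmt_11_general (Pf Pg : Measure Ω) (ν : Measure E)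
    (f g : E → ℝ) (hf : Measurable f) (hg : Measurable g)
    (hfg : ∀ᵐ t ∂ν, 0 < g t → 0 < f t) (hg_nonneg : 0 ≤ᵐ[ν] g)
    (hI_int : Integrable (fun t => g t * Real.log (g t / f t)) ν)
    (hI_pos : 0 < ∫ t, g t * Real.log (g t / f t) ∂ν)
    (X : ℕ → Ω → E) (hX : ∀ n, Measurable (X n))
    (hindep_f : iIndepFun X Pf)
    (hdist_f : ∀ n, Pf.map (X n) = ν.withDensity fun t => ENNReal.ofReal (f t))
    (hindep_g : iIndepFun X Pg)
    (hdist_g : ∀ n, Pg.map (X n) = ν.withDensity fun t => ENNReal.ofReal (g t))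
    (T : Ω → ℕ∞) (hT : IsStoppingTime (pastFiltration X hX) T)
    (R : Set Ω) (hR : ∀ n : ℕ, MeasurableSet[pastFiltration X hX n] (R ∩ {ω | T ω ≤ n}))
    (α β : ℝ) (hα : 0 < α) (hβ : 0 < β) (hαβ : α + β < 1)
    (herr1 : Pf R ≤ ENNReal.ofReal α) (herr2 : Pg Rᶜ ≤ ENNReal.ofReal β) :
    ENNReal.ofReal (binaryDivergence β α / ∫ t, g t * Real.log (g t / f t) ∂ν) ≤
      ∫⁻ ω, (T ω : ℝ≥0∞) ∂Pg := by
  rcases eq_or_ne (∫⁻ ω, (T ω : ℝ≥0∞) ∂Pg) ⊤ with hT_top | hT_int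
  · exact hT_top ▸ le_top
  have hT_ne_top := ae_ne_top_of_lintegral_ne_top (measurable_of_isStoppingTime hT) hT_int
  have herr2' : Pg (R ∩ {ω | T ω ≠ ⊤})ᶜ ≤ ENNReal.ofReal β :=
    (measure_mono_ae (hT_ne_top.mono fun ω hω hωR' hωR => hωR' ⟨hωR, hω⟩)).trans herr2
  have hbound := binaryDivergence_le_integral_mul_lintegral hX hindep_f hdist_f hindep_g hdist_g
    (Z := fun t => Real.log (g t / f t)) (by fun_prop)
    ((integrable_withDensity_ofReal_iff hg hg_nonneg).2 hI_int)
    (withDensity_exp_neg_log_div_le hf hg hfg) hT hT_int (measurableSet_inter_ne_top hT hR)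
    hα hβ hαβ ((measure_mono Set.inter_subset_left).trans herr1) herr2'
  simp only [integral_withDensity_ofReal hg hg_nonneg, smul_eq_mul] at hbound
  exact ENNReal.ofReal_le_of_le_toReal ((div_le_iff₀' hI_pos).2 hbound)

end SequentialTest

/-- Single-stream universal lower bound: any sequential test of `f` versus `g`,
given by a stopping time `T` (with respect to the natural filtration of the
observations, a.s. finite under both measures and integrable under `Pg`) and a
terminal `{0,1}`-valued decision `D` measurable with respect to the stopped
σ-algebra, with type-I error at most `α` and type-II error at most `β` where
`α + β < 1`, satisfies `E_g[T] ≥ d(β,α)/I`, where `I = ∫ g log(g/f) dν ∈ (0,∞)`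
and `d(x,y) = x log(x/(1-y)) + (1-x) log((1-x)/y)`. -/
theorem stmt_11
    {Ω : Type*} [MeasurableSpace Ω] (Pf Pg : Measure Ω)
    [IsProbabilityMeasure Pf] [IsProbabilityMeasure Pg]
    {E : Type*} [mE : MeasurableSpace E] (ν : Measure E) [SigmaFinite ν]
    (f g : E → ℝ) (hf : Measurable f) (hg : Measurable g)
    (hfpos : ∀ᵐ t ∂ν, 0 < f t) (hgpos : ∀ᵐ t ∂ν, 0 < g t)
    (hfprob : ∫ t, f t ∂ν = 1) (hgprob : ∫ t, g t ∂ν = 1)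
    (hI_int : Integrable (fun t => g t * Real.log (g t / f t)) ν)
    (hI_pos : 0 < ∫ t, g t * Real.log (g t / f t) ∂ν)
    (X : ℕ → Ω → E) (hX : ∀ n, Measurable (X n))
    (hindep_f : iIndepFun (m := fun _ => mE) X Pf)
    (hdist_f : ∀ n, Pf.map (X n) = ν.withDensity fun t => ENNReal.ofReal (f t))
    (hindep_g : iIndepFun (m := fun _ => mE) X Pg)
    (hdist_g : ∀ n, Pg.map (X n) = ν.withDensity fun t => ENNReal.ofReal (g t))
    (T : Ω → ℕ∞)
    (hT : ∀ n : ℕ,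
      MeasurableSet[MeasurableSpace.comap (fun ω => fun i : Fin n => X i ω)
        MeasurableSpace.pi] {ω | T ω ≤ (n : ℕ∞)})
    (hTf : Pf {ω | T ω ≠ ⊤} = 1) (hTg : Pg {ω | T ω ≠ ⊤} = 1)
    (hTint : ∫⁻ ω, (T ω : ℝ≥0∞) ∂Pg < ⊤)
    (D : Ω → ℕ) (hD01 : ∀ ω, D ω = 0 ∨ D ω = 1)
    (hD : ∀ n : ℕ,
      MeasurableSet[MeasurableSpace.comap (fun ω => fun i : Fin n => X i ω)
        MeasurableSpace.pi] ({ω | D ω = 1} ∩ {ω | T ω ≤ (n : ℕ∞)}))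
    (α β : ℝ) (hα : α ∈ Set.Ioo (0 : ℝ) 1) (hβ : β ∈ Set.Ioo (0 : ℝ) 1)
    (hαβ : α + β < 1)
    (herr1 : Pf {ω | D ω = 1} ≤ ENNReal.ofReal α)
    (herr2 : Pg {ω | D ω = 0} ≤ ENNReal.ofReal β) :
    ENNReal.ofReal
        ((β * Real.log (β / (1 - α)) + (1 - β) * Real.log ((1 - β) / α)) /
          ∫ t, g t * Real.log (g t / f t) ∂ν)
      ≤ ∫⁻ ω, (T ω : ℝ≥0∞) ∂Pg := by
  have hDc : {ω | D ω = 1}ᶜ = {ω | D ω = 0} := by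
    ext ω
    rcases hD01 ω with h | h <;> simp [h]
  exact stmt_11_general Pf Pg ν f g hf hg (hfpos.mono fun _ h _ => h) (hgpos.mono fun _ => le_of_lt)
    hI_int hI_pos X hX hindep_f hdist_f hindep_g hdist_g T hT {ω | D ω = 1} hD α β hα.1 hβ.1 hαβ
    herr1 (hDc ▸ herr2)
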